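/- Every planar graph G is 1-defective 4-choosable: for every assignment of lists of 4 colours to the vertices, there is a colouring φ with φ(v) ∈ L(v) for all v such that each colour class induces a subgraph of maximum degree at most 1. -/

import Mathlib

open MvPolynomial Finset

/- The graph polynomial `P_G = ∏_{uv ∈ E(G), u < v} (x_v - x_u)`. -/
open scoped Classical in
noncomputable def graphPoly {V : Type*} [Fintype V] [LinearOrder V]
    (G : SimpleGraph V) : MvPolynomial V ℝ :=
  ∏ p ∈ Finset.univ.filter (fun p : V × V => G.Adj p.1 p.2 ∧ p.1 < p.2),
    (X p.2 - X p.1)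

/- The signed graph polynomial `P_{G,σ} = ∏_{uv ∈ E(G), u < v} (x_v - σ(uv)·x_u)`. -/
open scoped Classical in
noncomputable def signedGraphPoly {V : Type*} [Fintype V] [LinearOrder V]
    (G : SimpleGraph V) (σ : Sym2 V → ℤ) : MvPolynomial V ℤ :=
  ∏ p ∈ Finset.univ.filter (fun p : V × V => G.Adj p.1 p.2 ∧ p.1 < p.2),
    (X p.2 - C (σ s(p.1, p.2)) * X p.1)

/- `H` is a minor of `G`: branch sets. -/
def SimpleGraph.IsMinor {W V : Type*} (H : SimpleGraph W) (G : SimpleGraph V) : Prop :=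
  ∃ f : W → Set V,
    (∀ w, (G.induce (f w)).Connected) ∧
    (∀ w₁ w₂, w₁ ≠ w₂ → Disjoint (f w₁) (f w₂)) ∧
    (∀ w₁ w₂, H.Adj w₁ w₂ → ∃ v₁ ∈ f w₁, ∃ v₂ ∈ f w₂, G.Adj v₁ v₂)

/- A graph is planar iff it has no `K₅` and no `K₃,₃` minor (Wagner's theorem). -/
def SimpleGraph.IsPlanar {V : Type*} (G : SimpleGraph V) : Prop :=
  ¬ SimpleGraph.IsMinor (completeGraph (Fin 5)) G ∧
  ¬ SimpleGraph.IsMinor (completeBipartiteGraph (Fin 3) (Fin 3)) G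


set_option linter.unusedSectionVars false
set_option linter.unusedSimpArgs false
section Alg
variable {V : Type*} [DecidableEq V]

noncomputable def sumN (N : Finset V) : V →₀ ℕ := ∑ p ∈ N, Finsupp.single p 1

lemma sumN_apply (N : Finset V) (w : V) : sumN N w = if w ∈ N then 1 else 0 := by
  simp [sumN, Finsupp.finsetSum_apply, Finsupp.single_apply]

lemma sumN_insert (N : Finset V) (p : V) (hp : p ∉ N) :
    sumN (insert p N) = sumN N + Finsupp.single p 1 := by
  simp [sumN, Finset.sum_insert hp, add_comm]

lemma coeff_fac (a b : V) (P : MvPolynomial V ℚ) (d : V →₀ ℕ) :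
    coeff d ((X a - X b) * P) = coeff d (X a * P) - coeff d (X b * P) := by
  rw [sub_mul, coeff_sub]

lemma coeff_X_mul_ne (a : V) (P : MvPolynomial V ℚ) (d : V →₀ ℕ) (h : coeff d (X a * P) ≠ 0) :
    ∃ e, d = e + Finsupp.single a 1 ∧ coeff e P ≠ 0 := by
  rw [coeff_X_mul'] at h
  split_ifs at h with ha
  · refine ⟨d - Finsupp.single a 1, ?_, h⟩
    ext w
    have : d a ≠ 0 := by simpa using ha
    by_cases hw : a = w
    · subst hw; simp; omega
    · simp [Finsupp.single_apply, hw]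
  · exact absurd rfl h

lemma fac (a b : V) (P : MvPolynomial V ℚ) (d : V →₀ ℕ) (h : coeff d ((X a - X b) * P) ≠ 0) :
    (∃ e, d = e + Finsupp.single a 1 ∧ coeff e P ≠ 0) ∨
    (∃ e, d = e + Finsupp.single b 1 ∧ coeff e P ≠ 0) := by
  rw [coeff_fac] at h
  by_cases h1 : coeff d (X a * P) = 0
  · right
    apply coeff_X_mul_ne
    intro h2
    rw [h1, h2] at h
    simp at h
  · left
    exact coeff_X_mul_ne _ _ _ h1

lemma coeff_X_mul_zero (a : V) (P : MvPolynomial V ℚ) (d : V →₀ ℕ) (h : d a = 0) :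
    coeff d (X a * P) = 0 := by
  rw [coeff_X_mul', if_neg (by simpa using h)]

lemma coeff_X_mul_add (a : V) (P : MvPolynomial V ℚ) (d : V →₀ ℕ) :
    coeff (d + Finsupp.single a 1) (X a * P) = coeff d P := by
  rw [mul_comm, coeff_mul_X]

lemma facA (a b : V) (hab : a ≠ b) (P : MvPolynomial V ℚ) (d : V →₀ ℕ) (h : d b = 0) :
    coeff (d + Finsupp.single a 1) ((X a - X b) * P) = coeff d P := by
  rw [coeff_fac, coeff_X_mul_add, coeff_X_mul_zero b, sub_zero]
  simp [h, Finsupp.single_apply, hab]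

lemma facB (a b : V) (hab : a ≠ b) (P : MvPolynomial V ℚ) (d : V →₀ ℕ) (h : d a = 0) :
    coeff (d + Finsupp.single b 1) ((X a - X b) * P) = - coeff d P := by
  rw [coeff_fac, coeff_X_mul_add, coeff_X_mul_zero a, zero_sub]
  simp [h, Finsupp.single_apply, hab.symm]

noncomputable def BB (v : V) (N : Finset V) (P : MvPolynomial V ℚ) : MvPolynomial V ℚ :=
  (∏ p ∈ N, (X v - X p)) * P

lemma BB_insert (v : V) (N : Finset V) (P : MvPolynomial V ℚ) (p : V) (hp : p ∉ N) :
    BB v (insert p N) P = (X v - X p) * BB v N P := by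
  simp [BB, Finset.prod_insert hp, mul_assoc]

lemma BB_eval (v : V) (N : Finset V) (P : MvPolynomial V ℚ) (φ : V → ℚ)
    (h : eval φ (BB v N P) ≠ 0) : eval φ P ≠ 0 ∧ ∀ p ∈ N, φ v ≠ φ p := by
  rw [BB, map_mul, map_prod] at h
  refine ⟨right_ne_zero_of_mul h, fun p hp hc => ?_⟩
  apply left_ne_zero_of_mul h
  apply Finset.prod_eq_zero hp
  simp [hc]

lemma fac_eval (v p : V) (P : MvPolynomial V ℚ) (φ : V → ℚ)
    (h : eval φ ((X v - X p) * P) ≠ 0) : eval φ P ≠ 0 ∧ φ v ≠ φ p := by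
  rw [map_mul] at h
  refine ⟨right_ne_zero_of_mul h, fun hc => ?_⟩
  apply left_ne_zero_of_mul h
  simp [hc]

lemma fac_hom (a b : V) (P : MvPolynomial V ℚ) (n : ℕ) (h : P.IsHomogeneous n) :
    ((X a - X b) * P).IsHomogeneous (n + 1) := by
  rw [add_comm]
  exact ((isHomogeneous_X _ a).sub (isHomogeneous_X _ b)).mul h

lemma BB_hom (v : V) (N : Finset V) (P : MvPolynomial V ℚ) (d : V →₀ ℕ)
    (h : P.IsHomogeneous d.degree) : (BB v N P).IsHomogeneous (d + sumN N).degree := by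
  induction N using Finset.induction_on with
  | empty => simpa [BB, sumN] using h
  | insert p N hp ih =>
    rw [BB_insert _ _ _ _ hp, sumN_insert _ _ hp, ← add_assoc, map_add, Finsupp.degree_single]
    exact fac_hom _ _ _ _ ih

def SuppIn (P : MvPolynomial V ℚ) (U : Finset V) : Prop :=
  ∀ d, coeff d P ≠ 0 → ∀ w, w ∉ U → d w = 0

lemma fac_supp (a b : V) (P : MvPolynomial V ℚ) (U : Finset V) (h : SuppIn P U)
    (ha : a ∈ U) (hb : b ∈ U) : SuppIn ((X a - X b) * P) U := by
  intro d hd w hw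
  rcases fac _ _ _ _ hd with ⟨e, rfl, he⟩ | ⟨e, rfl, he⟩
  · have := h e he w hw
    have h2 : a ≠ w := fun h => hw (h ▸ ha)
    simp [this, Finsupp.single_apply, h2]
  · have := h e he w hw
    have h2 : b ≠ w := fun h => hw (h ▸ hb)
    simp [this, Finsupp.single_apply, h2]

lemma BB_supp (v : V) (N : Finset V) (P : MvPolynomial V ℚ) (U : Finset V) (h : SuppIn P U)
    (hv : v ∈ U) (hN : N ⊆ U) : SuppIn (BB v N P) U := by
  induction N using Finset.induction_on with
  | empty => simpa [BB] using h
  | insert p N hp ih =>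
    rw [BB_insert _ _ _ _ hp]
    exact fac_supp _ _ _ _ (ih (fun x hx => hN (Finset.mem_insert_of_mem hx))) hv
      (hN (Finset.mem_insert_self _ _))

lemma SuppIn.mono {P : MvPolynomial V ℚ} {U U' : Finset V} (h : SuppIn P U) (hU : U ⊆ U') :
    SuppIn P U' := fun d hd w hw => h d hd w (fun h' => hw (hU h'))

lemma lemA (v : V) (N : Finset V) (P : MvPolynomial V ℚ) (d : V →₀ ℕ) (hd : d v = 0)
    (hv : v ∉ N) (h : coeff d P ≠ 0) : coeff (d + sumN N) (BB v N P) ≠ 0 := by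
  induction N using Finset.induction_on with
  | empty => simpa [BB, sumN] using h
  | insert p N hp ih =>
    rw [BB_insert _ _ _ _ hp, sumN_insert _ _ hp, ← add_assoc, facB, neg_ne_zero]
    · exact ih (fun h => hv (Finset.mem_insert_of_mem h))
    · rintro rfl; exact hv (Finset.mem_insert_self _ _)
    · rw [Finsupp.add_apply, hd, sumN_apply, if_neg (fun h => hv (Finset.mem_insert_of_mem h))]

lemma lemA' (v : V) (N : Finset V) (P : MvPolynomial V ℚ) (d : V →₀ ℕ) (hd : d v = 0)
    (h : coeff d (BB v N P) ≠ 0) : ∃ d', d = d' + sumN N ∧ coeff d' P ≠ 0 := by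
  induction N using Finset.induction_on generalizing d with
  | empty => exact ⟨d, by simp [sumN], by simpa [BB] using h⟩
  | insert p N hp ih =>
    rw [BB_insert _ _ _ _ hp] at h
    rcases fac _ _ _ _ h with ⟨e, rfl, he⟩ | ⟨e, rfl, he⟩
    · simp at hd
    · obtain ⟨d', rfl, h'⟩ := ih e (by simp at hd; exact hd.1) he
      exact ⟨d', by rw [sumN_insert _ _ hp, add_assoc], h'⟩

lemma lemB (v : V) (N : Finset V) (P : MvPolynomial V ℚ) (hP : ∀ d, coeff d P ≠ 0 → d v = 0)
    (d : V →₀ ℕ) (hd : d v = 0) (hv : v ∉ N)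
    (h : coeff (d + Finsupp.single v 1) (BB v N P) ≠ 0) :
    ∃ i ∈ N, ∃ d', d = d' + sumN (N.erase i) ∧ coeff d' P ≠ 0 := by
  induction N using Finset.induction_on generalizing d with
  | empty =>
    exfalso
    have := hP _ (by simpa [BB] using h)
    simp at this
  | insert p N hp ih =>
    rw [BB_insert _ _ _ _ hp] at h
    have hpv : p ≠ v := by rintro rfl; exact hv (Finset.mem_insert_self _ _)
    rcases fac _ _ _ _ h with ⟨e, he1, he⟩ | ⟨e, he1, he⟩
    · have : d = e := add_right_cancel he1
      subst this
      obtain ⟨d', h1, h2⟩ := lemA' v N P d hd he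
      exact ⟨p, Finset.mem_insert_self _ _, d', by rw [Finset.erase_insert hp]; exact h1, h2⟩
    · have hev : e v = 1 := by
        have := DFunLike.congr_fun he1 v
        simp [hd, Finsupp.single_apply, hpv] at this
        exact this.symm
      obtain ⟨e', rfl⟩ : ∃ e', e = e' + Finsupp.single v 1 := by
        refine ⟨e - Finsupp.single v 1, ?_⟩
        ext w
        by_cases hw : v = w
        · subst hw; simp [hev]
        · simp [Finsupp.single_apply, hw]
      have hd' : d = e' + Finsupp.single p 1 := by
        apply add_right_cancel (b := Finsupp.single v 1)
        rw [he1]; abel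
      obtain ⟨i, hi, d', h1, h2⟩ := ih e' (by simpa using hev)
        (fun h => hv (Finset.mem_insert_of_mem h)) he
      refine ⟨i, Finset.mem_insert_of_mem hi, d', ?_, h2⟩
      have hip : p ≠ i := by rintro rfl; exact hp hi
      rw [Finset.erase_insert_of_ne hip, sumN_insert, ← add_assoc, ← h1, hd']
      exact fun h => hp (Finset.mem_of_mem_erase h)

lemma coeff_sep (P1 P2 : MvPolynomial V ℚ) (U1 U2 : Finset V) (m1 m2 : V →₀ ℕ)
    (h1 : SuppIn P1 U1) (h2 : SuppIn P2 U2) (hm1 : coeff m1 P1 ≠ 0) (hm2 : coeff m2 P2 ≠ 0)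
    (hY : ∀ y, y ∈ U1 → y ∈ U2 → m2 y = 0) (hom : P2.IsHomogeneous m2.degree) :
    coeff (m1 + m2) (P1 * P2) ≠ 0 := by
  rw [coeff_mul, Finset.sum_eq_single (m1, m2)]
  · exact mul_ne_zero hm1 hm2
  · rintro ⟨d1, d2⟩ hd hne
    rw [Finset.HasAntidiagonal.mem_antidiagonal] at hd
    simp only at hd ⊢
    by_contra hc
    have c1 := left_ne_zero_of_mul hc
    have c2 := right_ne_zero_of_mul hc
    apply hne
    have hle : m2 ≤ d2 := by
      intro w
      have e1 := DFunLike.congr_fun hd w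
      simp only [Finsupp.add_apply] at e1
      by_cases hw1 : w ∈ U1
      · by_cases hw2 : w ∈ U2
        · rw [hY w hw1 hw2]; exact Nat.zero_le _
        · rw [h2 _ hm2 w hw2]; exact Nat.zero_le _
      · rw [h1 _ c1 w hw1, h1 _ hm1 w hw1] at e1; omega
    have hdeg : d2.degree = m2.degree := by
      by_contra hne'
      exact c2 (hom.coeff_eq_zero hne')
    have h22 : d2 = m2 := by
      obtain ⟨e, rfl⟩ := exists_add_of_le hle
      rw [map_add] at hdeg
      have : e.degree = 0 := by omega
      rw [Finsupp.degree_eq_zero_iff] at this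
      rw [this, add_zero]
    subst h22
    have := add_right_cancel hd
    rw [this]
  · intro h
    exact (h (by simp)).elim
end Alg


section GoodSec
variable {V : Type*} [DecidableEq V]

structure IsGood (G : SimpleGraph V) (U : Finset V) (Z : Set V) (X : Finset V)
    (M : V → V → Prop) (P : MvPolynomial V ℚ) (m : V →₀ ℕ) : Prop where
  symm : ∀ a b, M a b → M b a
  uniq : ∀ a b c, M a b → M a c → b = c
  cov : ∀ a b, M a b → a ∈ U ∧ a ∉ X
  hom : P.IsHomogeneous m.degree
  supp : SuppIn P U
  ne : coeff m P ≠ 0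
  mX : ∀ x ∈ X, m x = 0
  m3 : ∀ w ∈ U, m w ≤ 3
  m2 : ∀ w ∈ U, (∃ z ∈ Z, G.Adj z w) → m w ≤ 2
  m1 : ∀ w ∈ U, (∃ z ∈ Z, G.Adj z w) → (∃ t, M w t) → m w ≤ 1
  ev : ∀ φ : V → ℚ, eval φ P ≠ 0 → ∀ a ∈ U, ∀ b ∈ U, G.Adj a b → ¬ M a b →
    ¬ (a ∈ X ∧ b ∈ X) → φ a ≠ φ b

def Good (G : SimpleGraph V) (U : Finset V) (Z : Set V) (X : Finset V) : Prop :=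
  ∃ M P m, IsGood G U Z X M P m

lemma good_empty (G : SimpleGraph V) (Z : Set V) : Good G ∅ Z ∅ := by
  refine ⟨fun _ _ => False, 1, 0, ?_⟩
  constructor <;> try simp [isHomogeneous_one]
  intro d hd w _
  rw [coeff_one] at hd
  have : 0 = d := by by_contra h; simp [h] at hd
  simp [← this]

lemma good_del_x (G : SimpleGraph V) (U : Finset V) (Z Z' : Set V) (X : Finset V) (x : V)
    (hxZ : x ∈ Z') (hZZ : ∀ w ∈ U, (∃ z ∈ Z, G.Adj z w) → ∃ z ∈ Z', G.Adj z w)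
    (hxU : x ∈ U) (hX : ∀ p ∈ U, (∃ z ∈ Z, G.Adj z p) → G.Adj x p → p ∈ X)
    (hxX : x ∈ X ∨ X = ∅)
    (h : Good G (U.erase x) Z' (X.erase x)) : Good G U Z X := by
  classical
  obtain ⟨M, P, m, h⟩ := h
  have hmx : m x = 0 := h.supp _ h.ne x (by simp)
  set N := U.filter (fun p => G.Adj x p ∧ p ∉ X) with hN
  have hxN : x ∉ N := by simp [hN]
  have hval : ∀ w, (m + sumN N) w = m w + if w ∈ N then 1 else 0 := by
    intro w; rw [Finsupp.add_apply, sumN_apply]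
  refine ⟨M, BB x N P, m + sumN N, ?_⟩
  constructor
  · exact h.symm
  · exact h.uniq
  · intro a b hab
    have := h.cov a b hab
    grind
  · exact BB_hom _ _ _ _ h.hom
  · exact BB_supp _ _ _ _ (h.supp.mono (Finset.erase_subset _ _)) hxU (Finset.filter_subset _ _)
  · exact lemA _ _ _ _ hmx hxN h.ne
  · intro y hy
    rw [hval]
    have := h.mX y
    grind
  · intro w hw
    rw [hval]
    have h2 := h.m2 w
    have h3 := h.m3 w
    by_cases hwN : w ∈ N
    · have := h2 (by grind) ⟨x, hxZ, by grind⟩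
      simp [hwN]; omega
    · simp only [hwN]
      grind
  · intro w hw hz
    rw [hval]
    have h2 := h.m2 w
    have hwN : w ∉ N := by
      intro hwN
      have := hX w hw hz
      grind
    simp only [hwN]
    by_cases hwx : w = x
    · subst hwx; simp [hmx]
    · have := h2 (by grind) (hZZ w hw hz)
      simpa using this
  · intro w hw hz ht
    rw [hval]
    have h2 := h.m1 w
    have hwN : w ∉ N := by
      intro hwN
      have := hX w hw hz
      grind
    simp only [hwN]
    by_cases hwx : w = x
    · subst hwx; simp [hmx]
    · have := h2 (by grind) (hZZ w hw hz) ht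
      simpa using this
  · intro φ hφ a ha b hb hab hM hXX
    obtain ⟨e1, e2⟩ := BB_eval _ _ _ _ hφ
    have hne := hab.ne
    have hs := hab.symm
    by_cases hax : a = x
    · subst hax
      by_cases hbX : b ∈ X
      · rcases hxX with hxX | hxX
        · exact absurd ⟨hxX, hbX⟩ hXX
        · simp [hxX] at hbX
      · exact e2 b (by grind)
    · by_cases hbx : b = x
      · subst hbx
        by_cases haX : a ∈ X
        · rcases hxX with hxX | hxX
          · exact absurd ⟨haX, hxX⟩ hXX
          · simp [hxX] at haX
        · exact (e2 a (by grind)).symm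
      · exact h.ev φ e1 a (by grind) b (by grind) hab hM (by grind)



lemma good_ext0 (G : SimpleGraph V) (U : Finset V) (Z : Set V) (x : V)
    (h : Good G U Z {x}) : Good G U Z ∅ := by
  obtain ⟨M, P, m, h⟩ := h
  refine ⟨M, P, m, h.symm, h.uniq, ?_, h.hom, h.supp, h.ne, by simp, h.m3, h.m2, h.m1, ?_⟩
  · intro a b hab
    exact ⟨(h.cov a b hab).1, by simp⟩
  · intro φ hφ a ha b hb hab hM _
    apply h.ev φ hφ a ha b hb hab hM
    have := hab.ne
    grind

lemma good_ext1 (G : SimpleGraph V) (U : Finset V) (Z : Set V) (x y : V) (hx : x ∈ U) (hy : y ∈ U)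
    (hxy : x ≠ y)
    (h : Good G U Z {x, y}) : Good G U Z {x} := by
  obtain ⟨M, P, m, h⟩ := h
  have hmx : m x = 0 := h.mX x (by simp)
  have hmy : m y = 0 := h.mX y (by simp)
  have hval : ∀ w, (m + Finsupp.single y 1 : V →₀ ℕ) w = m w + if w = y then 1 else 0 := by
    intro w; simp [Finsupp.single_apply, eq_comm]
  refine ⟨M, (MvPolynomial.X y - MvPolynomial.X x) * P, m + Finsupp.single y 1, h.symm, h.uniq, ?_, ?_, ?_, ?_, ?_, ?_, ?_,
    ?_, ?_⟩
  · intro a b hab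
    have := h.cov a b hab
    grind
  · rw [map_add, Finsupp.degree_single]
    exact fac_hom _ _ _ _ h.hom
  · exact fac_supp _ _ _ _ h.supp hy hx
  · rw [facA _ _ hxy.symm _ _ hmx]
    exact h.ne
  · intro w hw
    rw [hval]; grind
  · intro w hw
    rw [hval]
    have := h.m3 w hw
    grind
  · intro w hw hz
    rw [hval]
    have := h.m2 w hw hz
    grind
  · intro w hw hz ht
    rw [hval]
    have := h.m1 w hw hz ht
    grind
  · intro φ hφ a ha b hb hab hM hXX
    obtain ⟨e1, e2⟩ := fac_eval _ _ _ _ hφ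
    have hne := hab.ne
    by_cases hc : a ∈ ({x, y} : Finset V) ∧ b ∈ ({x, y} : Finset V)
    · grind
    · exact h.ev φ e1 a ha b hb hab hM hc

lemma good_sep (G : SimpleGraph V) (U U1 U2 : Finset V) (Z : Set V) (X : Finset V)
    (hU : U = U1 ∪ U2) (hX : X ⊆ U1)
    (hE : ∀ a ∈ U, ∀ b ∈ U, G.Adj a b → (a ∈ U1 ∧ b ∈ U1) ∨ (a ∈ U2 ∧ b ∈ U2))
    (h1 : Good G U1 Z X) (h2 : Good G U2 Z (U1 ∩ U2)) : Good G U Z X := by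
  obtain ⟨M1, P1, m1, h1⟩ := h1
  obtain ⟨M2, P2, m2, h2⟩ := h2
  have hz2 : ∀ w, w ∈ U1 → m2 w = 0 := by
    intro w hw
    by_cases hw2 : w ∈ U2
    · exact h2.mX w (by grind)
    · exact h2.supp _ h2.ne w hw2
  have hz1 : ∀ w, w ∉ U1 → m1 w = 0 := fun w hw => h1.supp _ h1.ne w hw
  have d1 : ∀ a b, M1 a b → a ∈ U1 ∧ a ∉ X := h1.cov
  have d2 : ∀ a b, M2 a b → a ∈ U2 ∧ a ∉ U1 := by
    intro a b hab
    have := h2.cov a b hab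
    grind
  refine ⟨fun a b => M1 a b ∨ M2 a b, P1 * P2, m1 + m2, ?_, ?_, ?_, ?_, ?_, ?_, ?_, ?_, ?_,
    ?_, ?_⟩
  · rintro a b (h | h)
    · exact Or.inl (h1.symm _ _ h)
    · exact Or.inr (h2.symm _ _ h)
  · rintro a b c (h | h) (h' | h')
    · exact h1.uniq _ _ _ h h'
    · exact absurd (d1 _ _ h).1 (d2 _ _ h').2
    · exact absurd (d1 _ _ h').1 (d2 _ _ h).2
    · exact h2.uniq _ _ _ h h'
  · rintro a b (h | h)
    · have := d1 _ _ h
      grind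
    · have := d2 _ _ h
      grind
  · rw [map_add]
    exact h1.hom.mul h2.hom
  · intro d hd w hw
    by_contra hdw
    apply hd
    rw [coeff_mul]
    apply Finset.sum_eq_zero
    rintro ⟨e1, e2⟩ he
    rw [Finset.HasAntidiagonal.mem_antidiagonal] at he
    simp only at he ⊢
    by_contra hc
    have c1 := h1.supp _ (left_ne_zero_of_mul hc) w (by grind)
    have c2 := h2.supp _ (right_ne_zero_of_mul hc) w (by grind)
    apply hdw
    rw [← he]
    simp [c1, c2]
  · exact coeff_sep _ _ U1 U2 _ _ h1.supp h2.supp h1.ne h2.ne (fun y hy _ => hz2 y hy) h2.hom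
  · intro x hx
    rw [Finsupp.add_apply, h1.mX x hx, hz2 x (hX hx)]
  · intro w hw
    rw [Finsupp.add_apply]
    by_cases hw1 : w ∈ U1
    · rw [hz2 w hw1]; exact h1.m3 w hw1
    · rw [hz1 w hw1, zero_add]; exact h2.m3 w (by grind)
  · intro w hw hz
    rw [Finsupp.add_apply]
    by_cases hw1 : w ∈ U1
    · rw [hz2 w hw1]; exact h1.m2 w hw1 hz
    · rw [hz1 w hw1, zero_add]; exact h2.m2 w (by grind) hz
  · rintro w hw hz ⟨t, ht⟩
    rw [Finsupp.add_apply]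
    by_cases hw1 : w ∈ U1
    · rw [hz2 w hw1]
      refine h1.m1 w hw1 hz ⟨t, ht.resolve_right (fun h => (d2 _ _ h).2 hw1)⟩
    · rw [hz1 w hw1, zero_add]
      refine h2.m1 w (by grind) hz ⟨t, ht.resolve_left (fun h => hw1 (d1 _ _ h).1)⟩
  · intro φ hφ a ha b hb hab hM hXX
    rw [map_mul] at hφ
    have f1 := h1.ev φ (left_ne_zero_of_mul hφ) a
    have f2 := h2.ev φ (right_ne_zero_of_mul hφ) a
    by_cases hc : a ∈ U1 ∧ b ∈ U1
    · exact f1 hc.1 b hc.2 hab (fun h => hM (Or.inl h)) hXX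
    · rcases hE a ha b hb hab with h | h
      · exact absurd h hc
      · exact f2 h.1 b h.2 hab (fun h => hM (Or.inr h)) (by grind)

set_option maxHeartbeats 4000000 in
lemma good_del_v (G : SimpleGraph V) (U : Finset V) (Z : Set V) (X : Finset V) (v x u : V)
    (hvU : v ∈ U) (hvX : v ∉ X) (hxX : x ∈ X) (hXU : X ⊆ U) (huU : u ∈ U) (huv : u ≠ v)
    (hXS : ∀ y ∈ X, ∃ z ∈ Z, G.Adj z y) (huS : ∃ z ∈ Z, G.Adj z u)
    (hnb : ∀ p ∈ U, (∃ z ∈ Z, G.Adj z p) → G.Adj v p → p = x ∨ p = u)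
    (h : Good G (U.erase v) (insert v Z) X) : Good G U Z X := by
  classical
  obtain ⟨M, P, m, h⟩ := h
  have hmv : m v = 0 := h.supp _ h.ne v (by simp)
  have hmx : m x = 0 := h.mX x hxX
  have hxv : v ≠ x := by rintro rfl; exact hvX hxX
  have hMv : ∀ b, ¬ M v b := fun b hb => by have := h.cov _ _ hb; grind
  have hMv' : ∀ b, ¬ M b v := fun b hb => hMv b (h.symm _ _ hb)
  set N := U.filter (fun p => G.Adj v p ∧ p ≠ x ∧ p ≠ u) with hN
  have hvN : v ∉ N := by simp [hN]
  have hxN : x ∉ N := by simp [hN]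
  have huN : u ∉ N := by simp [hN]
  have hNU : N ⊆ U := Finset.filter_subset _ _
  have hNadj : ∀ p ∈ N, G.Adj v p := fun p hp => (Finset.mem_filter.1 hp).2.1
  have hNS : ∀ p ∈ N, ¬ ∃ z ∈ Z, G.Adj z p := by
    intro p hp hz
    have := hnb p (hNU hp) hz (hNadj p hp)
    grind
  have hNX : ∀ p ∈ N, p ∉ X := fun p hp hpX => hNS p hp (hXS p hpX)
  have hS' : ∀ w, (∃ z ∈ Z, G.Adj z w) → ∃ z ∈ insert v Z, G.Adj z w := by
    rintro w ⟨z, hz, hzw⟩; exact ⟨z, Set.mem_insert_of_mem _ hz, hzw⟩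
  have hN2 : ∀ p ∈ N, m p ≤ 2 := fun p hp =>
    h.m2 p (by grind) ⟨v, Set.mem_insert _ _, hNadj p hp⟩
  have hN1 : ∀ p ∈ N, (∃ t, M p t) → m p ≤ 1 := fun p hp =>
    h.m1 p (by grind) ⟨v, Set.mem_insert _ _, hNadj p hp⟩
  have hU3 : ∀ p ∈ U, m p ≤ 3 := by
    intro p hp
    by_cases hpv : p = v
    · subst hpv; omega
    · exact h.m3 p (by grind)
  have hU2 : ∀ p ∈ U, (∃ z ∈ Z, G.Adj z p) → m p ≤ 2 := by
    intro p hp hz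
    by_cases hpv : p = v
    · subst hpv; omega
    · exact h.m2 p (by grind) (hS' p hz)
  have hU1 : ∀ p ∈ U, (∃ z ∈ Z, G.Adj z p) → (∃ t, M p t) → m p ≤ 1 := by
    intro p hp hz
    by_cases hpv : p = v
    · subst hpv; omega
    · exact h.m1 p (by grind) (hS' p hz)
  have hsuppU : SuppIn P U := h.supp.mono (Finset.erase_subset _ _)
  have hPv : ∀ d, coeff d P ≠ 0 → d v = 0 := fun d hd => h.supp d hd v (by simp)
  have hEdge : ∀ φ : V → ℚ, eval φ P ≠ 0 → φ v ≠ φ x →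
      ∀ M' : V → V → Prop, (∀ a b, M a b → M' a b) → (∀ a b, M' a b → M' b a) →
      (∀ p ∈ insert u N, ¬ M' v p → φ v ≠ φ p) →
      ∀ a ∈ U, ∀ b ∈ U, G.Adj a b → ¬ M' a b → ¬ (a ∈ X ∧ b ∈ X) → φ a ≠ φ b := by
    intro φ e1 e2 M' hM1 hM2 e3 a ha b hb hab hM hXX
    have hne := hab.ne
    have hs := hab.symm
    by_cases hav : a = v
    · subst hav
      by_cases hbx : b = x
      · rw [hbx]; exact e2
      · exact e3 b (by grind) hM
    · by_cases hbv : b = v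
      · subst hbv
        by_cases hax : a = x
        · rw [hax]; exact e2.symm
        · exact (e3 a (by grind) (fun h => hM (hM2 _ _ h))).symm
      · exact h.ev φ e1 a (by grind) b (by grind) hab (fun h => hM (hM1 _ _ h)) hXX
  by_cases hcase : coeff (m + sumN N + Finsupp.single v 1) ((MvPolynomial.X v - MvPolynomial.X u) * BB v N P) = 0
  swap
  · have hval : ∀ w, (m + sumN N + Finsupp.single v 1 + Finsupp.single v 1 : V →₀ ℕ) w
        = m w + (if w ∈ N then 1 else 0) + if w = v then 2 else 0 := by
      intro w
      simp only [Finsupp.add_apply, sumN_apply, Finsupp.single_apply, eq_comm]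
      split_ifs <;> omega
    refine ⟨M, (MvPolynomial.X v - MvPolynomial.X x) * ((MvPolynomial.X v - MvPolynomial.X u) * BB v N P),
      m + sumN N + Finsupp.single v 1 + Finsupp.single v 1, h.symm, h.uniq,
      ?_, ?_, ?_, ?_, ?_, ?_, ?_, ?_, ?_⟩
    · intro a b hab
      have := h.cov a b hab
      grind
    · rw [map_add, Finsupp.degree_single, map_add, Finsupp.degree_single]
      exact fac_hom _ _ _ _ (fac_hom _ _ _ _ (BB_hom _ _ _ _ h.hom))
    · exact fac_supp _ _ _ _ (fac_supp _ _ _ _ (BB_supp _ _ _ _ hsuppU hvU hNU) hvU huU) hvU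
        (hXU hxX)
    · rw [facA _ _ hxv]
      · exact hcase
      · simp only [Finsupp.add_apply, sumN_apply, Finsupp.single_apply]
        simp [hmx, hxN, hxv]
    · intro y hy
      rw [hval]
      have := h.mX y hy
      grind
    · intro w hw
      rw [hval]
      have := hU3 w hw
      have := hN2 w
      grind
    · intro w hw hz
      rw [hval]
      have := hU2 w hw hz
      have := hNS w
      grind
    · intro w hw hz ht
      rw [hval]
      have := hU1 w hw hz ht
      have := hNS w
      have hwv : w ≠ v := by
        rintro rfl
        obtain ⟨t, ht⟩ := ht
        exact hMv _ ht
      grind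
    · intro φ hφ
      obtain ⟨e1, e2⟩ := fac_eval _ _ _ _ hφ
      obtain ⟨e1, e3⟩ := fac_eval _ _ _ _ e1
      obtain ⟨e1, e4⟩ := BB_eval _ _ _ _ e1
      refine hEdge φ e1 e2 M (fun _ _ h => h) h.symm ?_
      intro p hp _
      rcases Finset.mem_insert.1 hp with rfl | hp
      · exact e3
      · exact e4 p hp
  · rw [coeff_fac, coeff_X_mul_add] at hcase
    have hA := lemA v N P m hmv hvN h.ne
    have hu : coeff (m + sumN N + Finsupp.single v 1) (MvPolynomial.X u * BB v N P) ≠ 0 := by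
      intro h0; rw [h0, sub_zero] at hcase; exact hA hcase
    obtain ⟨e, he, hce⟩ := coeff_X_mul_ne _ _ _ hu
    have he' : ∀ w, m w + (if w ∈ N then 1 else 0) + (if w = v then 1 else 0)
        = e w + if w = u then 1 else 0 := by
      intro w
      have := DFunLike.congr_fun he w
      simp only [Finsupp.add_apply, sumN_apply, Finsupp.single_apply] at this
      simpa only [eq_comm] using this
    have hev : e v = 1 := by
      have := he' v
      grind
    obtain ⟨d, rfl⟩ : ∃ d, e = d + Finsupp.single v 1 := by
      refine ⟨e - Finsupp.single v 1, ?_⟩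
      ext w
      by_cases hw : v = w
      · subst hw; simp [hev]
      · simp [Finsupp.single_apply, hw]
    have hdv : d v = 0 := by simpa using hev
    obtain ⟨i, hi, d', rfl, hd'⟩ := lemB v N P hPv d hdv hvN hce
    have hd'v := hPv d' hd'
    -- pointwise relation
    have hrel : ∀ w, m w + (if w = i then 1 else 0) = d' w + if w = u then 1 else 0 := by
      intro w
      have := he' w
      simp only [Finsupp.add_apply, sumN_apply, Finsupp.single_apply] at this
      grind
    have hmu : 1 ≤ m u := by have := hrel u; grind
    have huX : u ∉ X := by intro hu; have := h.mX u hu; omega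
    have hdeg : d'.degree = m.degree := by
      have := h.hom
      by_contra hne
      exact hd' (h.hom.coeff_eq_zero hne)
    have hhom : P.IsHomogeneous d'.degree := by rw [hdeg]; exact h.hom
    have hxi : x ≠ i := by rintro rfl; exact hxN hi
    have hui : u ≠ i := by rintro rfl; exact huN hi
    have hd'x : d' x = 0 := by have := hrel x; grind
    have hiv : i ≠ v := by rintro rfl; exact hvN hi
    have key : ∀ (N' : Finset V) (M' : V → V → Prop), N' ⊆ N → (∀ a b, M a b → M' a b) →
        (∀ a b, M' a b → M' b a) → (∀ a b c, M' a b → M' a c → b = c) →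
        (∀ a b, M' a b → a ∈ U ∧ a ∉ X) →
        (∀ w ∈ U, d' w + (if w ∈ N' then 1 else 0) ≤ 3) →
        (∀ w ∈ U, w ≠ v → w ∉ N → (∃ t, M' w t) → ∃ t, M w t) →
        (∀ w ∈ N, w ∉ N' → M' v w) → Good G U Z X := by
      intro N' M' hN'N hM1 hM2 hM3 hM4 h3 hcv hrest
      have hval : ∀ w, (d' + sumN (insert u N') + Finsupp.single v 1 : V →₀ ℕ) w
          = d' w + (if w = u then 1 else 0) + (if w ∈ N' then 1 else 0)
            + if w = v then 1 else 0 := by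
        intro w
        simp only [Finsupp.add_apply, sumN_apply, Finsupp.single_apply]
        grind
      refine ⟨M', (MvPolynomial.X v - MvPolynomial.X x) * BB v (insert u N') P,
        d' + sumN (insert u N') + Finsupp.single v 1, hM2, hM3,
        hM4, ?_, ?_, ?_, ?_, ?_, ?_, ?_, ?_⟩
      · rw [map_add, Finsupp.degree_single]
        exact fac_hom _ _ _ _ (BB_hom _ _ _ _ hhom)
      · exact fac_supp _ _ _ _ (BB_supp _ _ _ _ hsuppU hvU
          (Finset.insert_subset huU (hN'N.trans hNU))) hvU (hXU hxX)
      · rw [facA _ _ hxv]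
        · refine lemA _ _ _ _ hd'v ?_ hd'
          grind
        · simp only [Finsupp.add_apply, sumN_apply]
          grind
      · intro y hy
        rw [hval]
        have := h.mX y hy
        have := hrel y
        have := hNX y
        grind
      · intro w hw
        rw [hval]
        have := h3 w hw
        have := hrel w
        have := hU3 w hw
        grind
      · intro w hw hz
        rw [hval]
        have := hrel w
        have := hU2 w hw hz
        have := hNS w
        grind
      · intro w hw hz ht
        rw [hval]
        have h1 := hrel w
        have h2 := hNS w
        have h5 := hU1 w hw hz
        have h4 := hcv w hw
        by_cases hwv : w = v
        · grind
        · have : w ∉ N := fun hw => h2 hw hz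
          have := h5 (h4 hwv this ht)
          grind
      · intro φ hφ
        obtain ⟨e1, e2⟩ := fac_eval _ _ _ _ hφ
        obtain ⟨e1, e4⟩ := BB_eval _ _ _ _ e1
        refine hEdge φ e1 e2 M' hM1 hM2 ?_
        intro p hp hMp
        apply e4
        have := hrest p
        grind
    by_cases hcov : ∃ t, M i t
    · refine key N M (Finset.Subset.refl _) (fun _ _ h => h) h.symm h.uniq ?_ ?_ ?_ ?_
      · intro a b hab
        have := h.cov a b hab
        grind
      · intro w hw
        have h1 := hrel w
        have h2 := hN2 w
        have h4 := hN1 i hi hcov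
        have h5 := hU3 w hw
        grind
      · intro w _ _ _ h; exact h
      · intro w h1 h2; exact absurd h1 h2
    · have hMi : ∀ t, ¬ M i t := fun t ht => hcov ⟨t, ht⟩
      have hMi' : ∀ t, ¬ M t i := fun t ht => hMi t (h.symm _ _ ht)
      refine key (N.erase i) (fun a b => M a b ∨ (a = v ∧ b = i) ∨ (a = i ∧ b = v))
        (Finset.erase_subset _ _) (fun _ _ h => Or.inl h) ?_ ?_ ?_ ?_ ?_ ?_
      · intro a b hab
        have := h.symm a b
        grind
      · intro a b c
        have := h.uniq a b c
        grind
      · intro a b hab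
        have := h.cov a b
        have := hNX i hi
        have := hNU hi
        grind
      · intro w hw
        have h1 := hrel w
        have h2 := hN2 w
        have h5 := hU3 w hw
        grind
      · rintro w hw hwv hwN ⟨t, ht⟩
        refine ⟨t, ?_⟩
        grind
      · intro w hw hw'
        grind

end GoodSec


section Struct
variable {V : Type*}

def Tch (G : SimpleGraph V) (A B : Set V) : Prop := ∃ a ∈ A, ∃ b ∈ B, G.Adj a b

lemma Tch.symm {G : SimpleGraph V} {A B : Set V} (h : Tch G A B) : Tch G B A := by
  obtain ⟨a, ha, b, hb, h⟩ := h
  exact ⟨b, hb, a, ha, h.symm⟩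

lemma k5_minor (G : SimpleGraph V) (A B C D E : Set V)
    (cA : (G.induce A).Connected) (cB : (G.induce B).Connected) (cC : (G.induce C).Connected)
    (cD : (G.induce D).Connected) (cE : (G.induce E).Connected)
    (dAB : Disjoint A B) (dAC : Disjoint A C) (dAD : Disjoint A D) (dAE : Disjoint A E)
    (dBC : Disjoint B C) (dBD : Disjoint B D) (dBE : Disjoint B E)
    (dCD : Disjoint C D) (dCE : Disjoint C E) (dDE : Disjoint D E)
    (tAB : Tch G A B) (tAC : Tch G A C) (tAD : Tch G A D) (tAE : Tch G A E)
    (tBC : Tch G B C) (tBD : Tch G B D) (tBE : Tch G B E)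
    (tCD : Tch G C D) (tCE : Tch G C E) (tDE : Tch G D E) :
    SimpleGraph.IsMinor (SimpleGraph.completeGraph (Fin 5)) G := by
  refine ⟨![A, B, C, D, E], ?_, ?_, ?_⟩
  · intro w
    fin_cases w <;> assumption
  · intro w₁ w₂ h
    fin_cases w₁ <;> fin_cases w₂ <;>
      first
        | exact absurd rfl h
        | assumption
        | (apply Disjoint.symm; assumption)
  · intro w₁ w₂ h
    change Tch G _ _
    fin_cases w₁ <;> fin_cases w₂ <;>
      first
        | exact absurd rfl h.ne
        | assumption
        | (apply Tch.symm; assumption)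

lemma k33_minor (G : SimpleGraph V) (A B C D E F : Set V)
    (cA : (G.induce A).Connected) (cB : (G.induce B).Connected) (cC : (G.induce C).Connected)
    (cD : (G.induce D).Connected) (cE : (G.induce E).Connected) (cF : (G.induce F).Connected)
    (dAB : Disjoint A B) (dAC : Disjoint A C) (dAD : Disjoint A D) (dAE : Disjoint A E)
    (dAF : Disjoint A F)
    (dBC : Disjoint B C) (dBD : Disjoint B D) (dBE : Disjoint B E) (dBF : Disjoint B F)
    (dCD : Disjoint C D) (dCE : Disjoint C E) (dCF : Disjoint C F)
    (dDE : Disjoint D E) (dDF : Disjoint D F) (dEF : Disjoint E F)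
    (tAD : Tch G A D) (tAE : Tch G A E) (tAF : Tch G A F)
    (tBD : Tch G B D) (tBE : Tch G B E) (tBF : Tch G B F)
    (tCD : Tch G C D) (tCE : Tch G C E) (tCF : Tch G C F) :
    SimpleGraph.IsMinor (completeBipartiteGraph (Fin 3) (Fin 3)) G := by
  refine ⟨Sum.elim ![A, B, C] ![D, E, F], ?_, ?_, ?_⟩
  · rintro (w | w) <;> fin_cases w <;> assumption
  · rintro (w₁ | w₁) (w₂ | w₂) h <;> fin_cases w₁ <;> fin_cases w₂ <;>
      first
        | exact absurd rfl h
        | assumption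
        | (apply Disjoint.symm; assumption)
  · intro w₁ w₂ h
    change Tch G _ _
    rcases w₁ with w₁ | w₁ <;> rcases w₂ with w₂ | w₂ <;> simp at h <;>
    fin_cases w₁ <;> fin_cases w₂ <;>
      first
        | assumption
        | (apply Tch.symm; assumption)

lemma conn_single (G : SimpleGraph V) (a : V) : (G.induce {a}).Connected := by
  have : Subsingleton ({a} : Set V) :=
    ⟨by rintro ⟨s, rfl⟩ ⟨t, rfl⟩; rfl⟩
  have : Nonempty ({a} : Set V) := ⟨⟨a, rfl⟩⟩
  exact ⟨SimpleGraph.Preconnected.of_subsingleton⟩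

lemma conn_insert (G : SimpleGraph V) (a : V) (D : Set V)
    (hD : (G.induce D).Preconnected) (h : D = ∅ ∨ ∃ w ∈ D, G.Adj a w) :
    (G.induce (insert a D)).Connected := by
  rcases h with rfl | ⟨w, hw, haw⟩
  · rw [insert_empty_eq]
    exact conn_single G a
  · have h1 := G.induce_union_connected (s := {a, w}) (t := D)
      (G.induce_pair_connected_of_adj haw).preconnected hD ⟨w, by simp, hw⟩
    have : ({a, w} : Set V) ∪ D = insert a D := by
      ext t; simp only [Set.mem_union, Set.mem_insert_iff, Set.mem_singleton_iff]
      constructor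
      · rintro ((h | rfl) | h)
        · exact Or.inl h
        · exact Or.inr hw
        · exact Or.inr h
      · tauto
    rwa [this] at h1

def NoSep (G : SimpleGraph V) (W : Finset V) : Prop :=
  ∀ A ⊆ W, A.Nonempty → (∀ a ∈ A, ∀ b ∈ W, G.Adj a b → b ∈ A) → A = W

lemma NoSep.walk {G : SimpleGraph V} {W : Finset V} (h : NoSep G W) {b c : V} (hb : b ∈ W)
    (hc : c ∈ W) : ∃ p : G.Walk b c, ∀ w ∈ p.support, w ∈ W := by
  classical
  have := h (W.filter (fun t => ∃ p : G.Walk b t, ∀ w ∈ p.support, w ∈ W))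
    (Finset.filter_subset _ _) ⟨b, by
      rw [Finset.mem_filter]
      exact ⟨hb, SimpleGraph.Walk.nil, by simpa using hb⟩⟩ (by
      intro s hs t ht hst
      rw [Finset.mem_filter] at hs ⊢
      obtain ⟨hs, p, hp⟩ := hs
      refine ⟨ht, p.concat hst, ?_⟩
      intro w hw
      rw [SimpleGraph.Walk.support_concat] at hw
      simp at hw
      rcases hw with hw | rfl
      · exact hp w hw
      · exact ht)
  rw [← this, Finset.mem_filter] at hc
  exact hc.2

lemma link (G : SimpleGraph V) (W : Finset V) (h : NoSep G W) (b c : V) (hb : b ∈ W) (hc : c ∈ W)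
    (hbc : b ≠ c) : ∃ D : Set V, (∀ w ∈ D, w ∈ W ∧ w ≠ b ∧ w ≠ c) ∧
      ((D = ∅ ∧ G.Adj b c) ∨
        ((G.induce D).Connected ∧ (∃ w ∈ D, G.Adj b w) ∧ ∃ w ∈ D, G.Adj c w)) := by
  classical
  obtain ⟨p0, hp0⟩ := h.walk hb hc
  obtain ⟨p, hpp, hpW⟩ : ∃ p : G.Walk b c, p.IsPath ∧ ∀ w ∈ p.support, w ∈ W :=
    ⟨p0.bypass, p0.bypass_isPath, fun w hw => hp0 w (p0.support_bypass_subset_support hw)⟩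
  cases p with
  | nil => exact absurd rfl hbc
  | @cons _ w _ hbw q =>
    rw [SimpleGraph.Walk.cons_isPath_iff] at hpp
    obtain ⟨r, hr⟩ : ∃ r, r = q.reverse := ⟨_, rfl⟩
    have hrp : r.IsPath := by rw [hr]; exact hpp.1.reverse
    have hrs : ∀ t, t ∈ r.support ↔ t ∈ q.support := by intro t; rw [hr]; simp
    have hqW : ∀ t ∈ q.support, t ∈ W := fun t ht => hpW t (by simp [ht])
    have hcw : ∀ r' : G.Walk c w, r' = r → True := fun _ _ => trivial
    clear hr
    cases r with
    | nil => exact ⟨∅, by simp, Or.inl ⟨rfl, hbw⟩⟩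
    | @cons _ t _ hct s =>
      rw [SimpleGraph.Walk.cons_isPath_iff] at hrp
      have hsq : ∀ y ∈ s.support, y ∈ q.support := fun y hy => (hrs y).1 (by simp [hy])
      refine ⟨{y | y ∈ s.support}, ?_, Or.inr ⟨s.connected_induce_support, ?_, ?_⟩⟩
      · intro y hy
        refine ⟨hqW y (hsq y hy), ?_, ?_⟩
        · rintro rfl; exact hpp.2 (hsq _ hy)
        · rintro rfl; exact hrp.2 hy
      · exact ⟨w, s.end_mem_support, hbw⟩
      · exact ⟨t, s.start_mem_support, hct⟩

lemma no_three [DecidableEq V] (G : SimpleGraph V) (hG : G.IsPlanar) (U : Finset V) (Z : Set V)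
    (hZ : (G.induce Z).Preconnected) (hZU : ∀ z ∈ Z, z ∉ U) (v a b c : V)
    (hv : v ∈ U) (ha : a ∈ U) (hb : b ∈ U) (hc : c ∈ U) (hab : a ≠ b) (hac : a ≠ c) (hbc : b ≠ c)
    (va : G.Adj v a) (vb : G.Adj v b) (vc : G.Adj v c)
    (zv : ∃ z ∈ Z, G.Adj z v) (za : ∃ z ∈ Z, G.Adj z a) (zb : ∃ z ∈ Z, G.Adj z b)
    (zc : ∃ z ∈ Z, G.Adj z c)
    (na : NoSep G (U \ {v, a})) (nb : NoSep G (U \ {v, b})) (nc : NoSep G (U \ {v, c})) :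
    False := by
  have hva := va.ne
  have hvb := vb.ne
  have hvc := vc.ne
  have hZc : (G.induce Z).Connected := by
    obtain ⟨z, hz, _⟩ := zv
    have : Nonempty Z := ⟨⟨z, hz⟩⟩
    exact ⟨hZ⟩
  have star : ∀ D : Set V, (∀ w ∈ D, w ∈ U ∧ w ≠ v ∧ w ≠ a ∧ w ≠ b ∧ w ≠ c) →
      (G.induce D).Connected → (∃ w ∈ D, G.Adj a w) → (∃ w ∈ D, G.Adj b w) →
      (∃ w ∈ D, G.Adj c w) → False := by
    intro D hD cD ta tb tc
    apply hG.2
    apply k33_minor G D {v} Z {a} {b} {c} cD (conn_single _ _) hZc (conn_single _ _)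
      (conn_single _ _) (conn_single _ _)
    all_goals first
      | (rw [Set.disjoint_left]; intro w hw hw'; (try simp only [Set.mem_singleton_iff] at hw hw'); grind)
      | (simp only [Tch, Set.mem_singleton_iff]; grind [SimpleGraph.adj_comm])
  obtain ⟨Dab, hab1, hab2⟩ := link G _ nc a b (by simp [ha, hva.symm, hac])
    (by simp [hb, hvb.symm, hbc]) hab
  obtain ⟨Dbc, hbc1, hbc2⟩ := link G _ na b c (by simp [hb, hvb.symm, hab.symm])
    (by simp [hc, hvc.symm, hac.symm]) hbc
  obtain ⟨Dca, hca1, hca2⟩ := link G _ nb c a (by simp [hc, hvc.symm, hbc.symm])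
    (by simp [ha, hva.symm, hab]) hac.symm
  have fab : ∀ w ∈ Dab, w ∈ U ∧ w ≠ v ∧ w ≠ a ∧ w ≠ b ∧ w ≠ c := by
    intro w hw; have := hab1 w hw; simp at this; tauto
  have fbc : ∀ w ∈ Dbc, w ∈ U ∧ w ≠ v ∧ w ≠ a ∧ w ≠ b ∧ w ≠ c := by
    intro w hw; have := hbc1 w hw; simp at this; tauto
  have fca : ∀ w ∈ Dca, w ∈ U ∧ w ≠ v ∧ w ≠ a ∧ w ≠ b ∧ w ≠ c := by
    intro w hw; have := hca1 w hw; simp at this; tauto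
  have disj : ∀ D D' : Set V, (∀ w ∈ D, w ∈ U ∧ w ≠ v ∧ w ≠ a ∧ w ≠ b ∧ w ≠ c) →
      (∀ w ∈ D', w ∈ U ∧ w ≠ v ∧ w ≠ a ∧ w ≠ b ∧ w ≠ c) →
      (D.Nonempty → (G.induce D).Connected) → (D'.Nonempty → (G.induce D').Connected) →
      (D.Nonempty → D'.Nonempty → (∃ w ∈ D ∪ D', G.Adj a w) ∧ (∃ w ∈ D ∪ D', G.Adj b w) ∧
        (∃ w ∈ D ∪ D', G.Adj c w)) → Disjoint D D' := by
    intro D D' h1 h2 c1 c2 ht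
    by_contra hn
    rw [Set.not_disjoint_iff] at hn
    obtain ⟨w, hw, hw'⟩ := hn
    have ht := ht ⟨w, hw⟩ ⟨w, hw'⟩
    refine star (D ∪ D') ?_ (G.induce_union_connected (c1 ⟨w, hw⟩).preconnected
      (c2 ⟨w, hw'⟩).preconnected ⟨w, hw, hw'⟩) ht.1 ht.2.1 ht.2.2
    rintro t (h | h)
    · exact h1 t h
    · exact h2 t h
  have c1 : Dab.Nonempty → (G.induce Dab).Connected := by
    rintro ⟨w, hw⟩
    rcases hab2 with h | h
    · rw [h.1] at hw; exact hw.elim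
    · exact h.1
  have c2 : Dbc.Nonempty → (G.induce Dbc).Connected := by
    rintro ⟨w, hw⟩
    rcases hbc2 with h | h
    · rw [h.1] at hw; exact hw.elim
    · exact h.1
  have c3 : Dca.Nonempty → (G.induce Dca).Connected := by
    rintro ⟨w, hw⟩
    rcases hca2 with h | h
    · rw [h.1] at hw; exact hw.elim
    · exact h.1
  have t1 : Dab.Nonempty → (∃ w ∈ Dab, G.Adj a w) ∧ ∃ w ∈ Dab, G.Adj b w := by
    rintro ⟨w, hw⟩
    rcases hab2 with h | h
    · rw [h.1] at hw; exact hw.elim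
    · exact h.2
  have t2 : Dbc.Nonempty → (∃ w ∈ Dbc, G.Adj b w) ∧ ∃ w ∈ Dbc, G.Adj c w := by
    rintro ⟨w, hw⟩
    rcases hbc2 with h | h
    · rw [h.1] at hw; exact hw.elim
    · exact h.2
  have t3 : Dca.Nonempty → (∃ w ∈ Dca, G.Adj c w) ∧ ∃ w ∈ Dca, G.Adj a w := by
    rintro ⟨w, hw⟩
    rcases hca2 with h | h
    · rw [h.1] at hw; exact hw.elim
    · exact h.2
  have d12 : Disjoint Dab Dbc := disj _ _ fab fbc c1 c2 (by
    intro h1 h2; have := t1 h1; have := t2 h2; simp only [Set.mem_union]; grind)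
  have d23 : Disjoint Dbc Dca := disj _ _ fbc fca c2 c3 (by
    intro h1 h2; have := t2 h1; have := t3 h2; simp only [Set.mem_union]; grind)
  have d13 : Disjoint Dab Dca := disj _ _ fab fca c1 c3 (by
    intro h1 h2; have := t1 h1; have := t3 h2; simp only [Set.mem_union]; grind)
  rw [Set.disjoint_left] at d12 d23 d13
  have ci : ∀ (s : V) (D : Set V), (D.Nonempty → (G.induce D).Connected) →
      (D.Nonempty → ∃ w ∈ D, G.Adj s w) → (G.induce (insert s D)).Connected := by
    intro s D h1 h2
    rcases D.eq_empty_or_nonempty with rfl | h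
    · rw [insert_empty_eq]; exact conn_single _ _
    · exact conn_insert _ _ _ (h1 h).preconnected (Or.inr (h2 h))
  have tch : ∀ (s t : V) (D E : Set V),
      ((D = ∅ ∧ G.Adj s t) ∨ ((G.induce D).Connected ∧ (∃ w ∈ D, G.Adj s w) ∧
        ∃ w ∈ D, G.Adj t w)) → Tch G (insert s D) (insert t E) := by
    rintro s t D E (⟨_, h⟩ | ⟨_, _, w, hw, h⟩)
    · exact ⟨s, by simp, t, by simp, h⟩
    · exact ⟨w, by simp [hw], t, by simp, h.symm⟩
  apply hG.1
  apply k5_minor G (insert a Dab) (insert b Dbc) (insert c Dca) {v} Z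
    (ci _ _ c1 (fun h => (t1 h).1)) (ci _ _ c2 (fun h => (t2 h).1)) (ci _ _ c3 (fun h => (t3 h).1))
    (conn_single _ _) hZc
  case tAB => exact tch _ _ _ _ hab2
  case tBC => exact tch _ _ _ _ hbc2
  case tAC => exact (tch _ _ _ _ hca2).symm
  all_goals first
    | (rw [Set.disjoint_left]; intro w hw hw'
       (try simp only [Set.mem_singleton_iff, Set.mem_insert_iff] at hw hw'); grind)
    | (simp only [Tch, Set.mem_singleton_iff, Set.mem_insert_iff]; grind [SimpleGraph.adj_comm])
end Struct


section Main
variable {V : Type*} [DecidableEq V]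

lemma good_split (G : SimpleGraph V) (U : Finset V) (Z : Set V) (X Y A : Finset V)
    (ih : ∀ U' X' : Finset V, U'.card < U.card → X' ⊆ U' → U' ⊆ U →
      (∀ x ∈ X', ∃ z ∈ Z, G.Adj z x) → X'.card ≤ 2 →
      (∀ x ∈ X', ∀ y ∈ X', x ≠ y → G.Adj x y) → Good G U' Z X')
    (hXU : X ⊆ U) (hXS : ∀ x ∈ X, ∃ z ∈ Z, G.Adj z x) (hX2 : X.card ≤ 2)
    (hXc : ∀ x ∈ X, ∀ y ∈ X, x ≠ y → G.Adj x y)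
    (hYU : Y ⊆ U) (hYS : ∀ x ∈ Y, ∃ z ∈ Z, G.Adj z x) (hY2 : Y.card ≤ 2)
    (hYc : ∀ x ∈ Y, ∀ y ∈ Y, x ≠ y → G.Adj x y)
    (hA : A ⊆ U \ Y) (hAn : A.Nonempty) (hAp : A ≠ U \ Y)
    (hcl : ∀ a ∈ A, ∀ b ∈ U \ Y, G.Adj a b → b ∈ A)
    (hXA : X ⊆ A ∪ Y) : Good G U Z X := by
  have hAU : ∀ a ∈ A, a ∈ U ∧ a ∉ Y := fun a ha => by simpa using hA ha
  obtain ⟨b, hb, hbA⟩ : ∃ b ∈ U \ Y, b ∉ A := by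
    by_contra h
    push Not at h
    exact hAp (subset_antisymm hA h)
  obtain ⟨a, ha⟩ := hAn
  have s1 : A ∪ Y ⊆ U := by
    intro t ht; have := hAU t; have := @hYU t; grind
  have s2 : U \ A ⊆ U := Finset.sdiff_subset
  have hi : (A ∪ Y) ∩ (U \ A) = Y := by
    ext t; have := hAU t; have := @hYU t; grind
  refine good_sep G U (A ∪ Y) (U \ A) Z X ?_ hXA ?_ ?_ ?_
  · ext t; have := hAU t; have := @hYU t; grind
  · intro s hs t ht hst
    have h1 := hcl s
    have h2 := hcl t
    have := hAU s
    have := hAU t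
    have hts := hst.symm
    grind
  · apply ih _ _ _ hXA s1 hXS hX2 hXc
    apply Finset.card_lt_card
    refine ⟨s1, fun h => ?_⟩
    have := @h b
    grind
  · rw [hi]
    refine ih _ _ ?_ ?_ s2 hYS hY2 hYc
    · apply Finset.card_lt_card
      refine ⟨s2, fun h => ?_⟩
      have := @h a (hAU a ha).1
      grind
    · rw [← hi]; exact Finset.inter_subset_right

lemma good_main (G : SimpleGraph V) (hG : G.IsPlanar) : ∀ (n : ℕ) (U : Finset V) (Z : Set V)
    (X : Finset V), 3 * U.card + (2 - X.card) < n → (G.induce Z).Preconnected →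
    (∀ z ∈ Z, z ∉ U) → X ⊆ U → (∀ x ∈ X, ∃ z ∈ Z, G.Adj z x) → X.card ≤ 2 →
    (∀ x ∈ X, ∀ y ∈ X, x ≠ y → G.Adj x y) → Good G U Z X := by
  intro n
  induction n with
  | zero => intro U Z X h; omega
  | succ n ih =>
    intro U Z X hn hZ hZU hXU hXS hX2 hXc
    rcases U.eq_empty_or_nonempty with rfl | ⟨p, hp⟩
    · obtain rfl : X = ∅ := Finset.subset_empty.1 hXU
      exact good_empty G Z
    by_cases hsep : ∃ Y ⊆ U, (∀ x ∈ Y, ∃ z ∈ Z, G.Adj z x) ∧ Y.card ≤ 2 ∧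
        (∀ x ∈ Y, ∀ y ∈ Y, x ≠ y → G.Adj x y) ∧ ¬ NoSep G (U \ Y)
    · obtain ⟨Y, hYU, hYS, hY2, hYc, hns⟩ := hsep
      have ih' : ∀ U' X' : Finset V, U'.card < U.card → X' ⊆ U' → U' ⊆ U →
          (∀ x ∈ X', ∃ z ∈ Z, G.Adj z x) → X'.card ≤ 2 →
          (∀ x ∈ X', ∀ y ∈ X', x ≠ y → G.Adj x y) → Good G U' Z X' := by
        intro U' X' hc hX' hU' hS' h2' hc'
        exact ih U' Z X' (by omega) hZ (fun z hz h => hZU z hz (hU' h)) hX' hS' h2' hc'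
      unfold NoSep at hns
      push Not at hns
      obtain ⟨A, hA, hAn, hcl, hAp⟩ := hns
      by_cases hXA : X ⊆ A ∪ Y
      · exact good_split G U Z X Y A ih' hXU hXS hX2 hXc hYU hYS hY2 hYc hA hAn hAp hcl hXA
      · obtain ⟨x, hx, hxA⟩ := Finset.not_subset.1 hXA
        have hAU : ∀ a ∈ A, a ∈ U ∧ a ∉ Y := fun a ha => by simpa using hA ha
        refine good_split G U Z X Y ((U \ Y) \ A) ih' hXU hXS hX2 hXc hYU hYS hY2 hYc
          Finset.sdiff_subset ⟨x, ?_⟩ ?_ ?_ ?_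
        · have := hXU hx; grind
        · obtain ⟨a, ha⟩ := hAn
          intro h
          have h1 := hA ha
          have h2 : a ∉ (U \ Y) \ A := by simp [ha]
          rw [h] at h2
          exact h2 h1
        · intro s hs t ht hst
          have := hcl t
          have hts := hst.symm
          grind
        · intro t ht
          have h1 := hXU ht
          have h2 := hXU hx
          have h3 := hcl t
          have h4 := hXc t ht x hx
          grind
    · push Not at hsep
      have hno : ∀ v ∈ U, ∀ a ∈ U, (∃ z ∈ Z, G.Adj z v) → (∃ z ∈ Z, G.Adj z a) → G.Adj v a →
          NoSep G (U \ {v, a}) := by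
        intro v hv a ha zv za hva
        apply hsep
        · intro t; simp only [Finset.mem_insert, Finset.mem_singleton]
          rintro (rfl | rfl) <;> assumption
        · intro t; simp only [Finset.mem_insert, Finset.mem_singleton]
          rintro (rfl | rfl) <;> assumption
        · exact Finset.card_le_two
        · intro s hs t ht hst
          simp only [Finset.mem_insert, Finset.mem_singleton] at hs ht
          rcases hs with rfl | rfl <;> rcases ht with rfl | rfl
          · exact absurd rfl hst
          · exact hva
          · exact hva.symm
          · exact absurd rfl hst
      have hins : ∀ v ∈ U, (∃ z ∈ Z, G.Adj z v) → (G.induce (insert v Z)).Preconnected := by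
        rintro v _ ⟨z, hz, hzv⟩
        exact (conn_insert G v Z hZ (Or.inr ⟨z, hz, hzv.symm⟩)).preconnected
      have hdis : ∀ v, ∀ z ∈ insert v Z, z ∉ U.erase v := by
        rintro v z (rfl | hz)
        · simp
        · intro h; exact hZU z hz (Finset.mem_of_mem_erase h)
      have hec : ∀ v ∈ U, (U.erase v).card + 1 = U.card := fun v hv =>
        Finset.card_erase_add_one hv
      have hdelx : ∀ x ∈ X, (∀ p ∈ U, (∃ z ∈ Z, G.Adj z p) → G.Adj x p → p ∈ X) →
          Good G U Z X := by
        intro x hx hxn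
        have hxU := hXU hx
        refine good_del_x G U Z (insert x Z) X x (by simp) ?_ hxU hxn (Or.inl hx) ?_
        · rintro w _ ⟨z, hz, h⟩
          exact ⟨z, Or.inr hz, h⟩
        · have h1 := hec x hxU
          have h2 := Finset.card_erase_add_one hx
          refine ih _ _ _ (by omega) (hins x hxU (hXS x hx)) (hdis x)
            (Finset.erase_subset_erase x hXU) ?_ (by omega) ?_
          · intro y hy
            obtain ⟨z, hz, h⟩ := hXS y (Finset.mem_of_mem_erase hy)
            exact ⟨z, Or.inr hz, h⟩
          · intro s hs t ht
            exact hXc s (Finset.mem_of_mem_erase hs) t (Finset.mem_of_mem_erase ht)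
      have hcard : X.card = 0 ∨ X.card = 1 ∨ X.card = 2 := by omega
      rcases hcard with h0 | h1 | h2
      · obtain rfl := Finset.card_eq_zero.1 h0
        by_cases hS : ∃ x ∈ U, ∃ z ∈ Z, G.Adj z x
        · obtain ⟨x, hxU, hxS⟩ := hS
          apply good_ext0 G U Z x
          refine ih _ _ _ ?_ hZ hZU (by simpa using hxU) (by simpa using hxS) (by simp) ?_
          · simp at hn ⊢; omega
          · intro s hs t ht hst
            simp at hs ht
            exact absurd (hs.trans ht.symm) hst
        · push Not at hS
          refine good_del_x G U Z {p} ∅ p (by simp) ?_ hp ?_ (Or.inr rfl) ?_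
          · rintro w hw ⟨z, hz, h⟩
            exact absurd h (hS w hw z hz)
          · rintro w hw ⟨z, hz, h⟩
            exact absurd h (hS w hw z hz)
          · have h1 := hec p hp
            rw [Finset.erase_empty]
            refine ih _ _ _ ?_ (conn_single G p).preconnected ?_ (by simp) (by simp) (by simp)
              (by simp)
            · simp at hn ⊢; omega
            · rintro z rfl; simp
      · obtain ⟨x, rfl⟩ := Finset.card_eq_one.1 h1
        have hxU : x ∈ U := hXU (by simp)
        by_cases hy : ∃ y ∈ U, (∃ z ∈ Z, G.Adj z y) ∧ G.Adj x y
        · obtain ⟨y, hyU, hyS, hxy⟩ := hy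
          apply good_ext1 G U Z x y hxU hyU hxy.ne
          have hc2 : ({x, y} : Finset V).card = 2 := Finset.card_pair hxy.ne
          refine ih _ _ _ (by omega) hZ hZU ?_ ?_ (by omega) ?_
          · intro t; simp only [Finset.mem_insert, Finset.mem_singleton]
            rintro (rfl | rfl) <;> assumption
          · intro t; simp only [Finset.mem_insert, Finset.mem_singleton]
            rintro (rfl | rfl)
            · exact hXS _ (by simp)
            · exact hyS
          · intro s hs t ht hst
            simp only [Finset.mem_insert, Finset.mem_singleton] at hs ht
            rcases hs with rfl | rfl <;> rcases ht with rfl | rfl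
            · exact absurd rfl hst
            · exact hxy
            · exact hxy.symm
            · exact absurd rfl hst
        · push Not at hy
          apply hdelx x (by simp)
          intro q hq hqS hxq
          exact absurd hxq (hy q hq hqS)
      · obtain ⟨x, y, hxy, rfl⟩ := Finset.card_eq_two.1 h2
        have hxU : x ∈ U := hXU (by simp)
        have hxS := hXS x (by simp)
        by_cases hv : ∃ v ∈ U, (∃ z ∈ Z, G.Adj z v) ∧ G.Adj x v ∧ v ≠ y
        · obtain ⟨v, hvU, hvS, hxv, hvy⟩ := hv
          have hvX : v ∉ ({x, y} : Finset V) := by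
            simp [hvy, hxv.ne.symm]
          have key : ∃ u ∈ U, u ≠ v ∧ (∃ z ∈ Z, G.Adj z u) ∧
              ∀ p ∈ U, (∃ z ∈ Z, G.Adj z p) → G.Adj v p → p = x ∨ p = u := by
            by_cases hu : ∃ u ∈ U, (∃ z ∈ Z, G.Adj z u) ∧ G.Adj v u ∧ u ≠ x
            · obtain ⟨u, huU, huS, hvu, hux⟩ := hu
              refine ⟨u, huU, hvu.ne.symm, huS, ?_⟩
              intro q hq hqS hvq
              by_contra hcon
              push Not at hcon
              exact no_three G hG U Z hZ hZU v x u q hvU hxU huU hq hux.symm hcon.1.symm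
                hcon.2.symm hxv.symm hvu hvq hvS hxS huS hqS
                (hno v hvU x hxU hvS hxS hxv.symm) (hno v hvU u huU hvS huS hvu)
                (hno v hvU q hq hvS hqS hvq)
            · push Not at hu
              exact ⟨x, hxU, hxv.ne, hxS, fun q hq hqS hvq => Or.inl (hu q hq hqS hvq)⟩
          obtain ⟨u, huU, huv, huS, hnb⟩ := key
          refine good_del_v G U Z _ v x u hvU hvX (by simp) hXU huU huv hXS huS hnb ?_
          have h1 := hec v hvU
          refine ih _ _ _ (by omega) (hins v hvU hvS) (hdis v) ?_ ?_ hX2 hXc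
          · intro t ht
            exact Finset.mem_erase.2 ⟨fun h => hvX (h ▸ ht), hXU ht⟩
          · intro t ht
            obtain ⟨z, hz, h⟩ := hXS t ht
            exact ⟨z, Or.inr hz, h⟩
        · push Not at hv
          apply hdelx x (by simp)
          intro q hq hqS hxq
          rw [hv q hq hqS hxq]
          simp
end Main


/- Every planar graph is 1-defective 4-choosable: from any lists of size 4 there is a
colouring in which every colour class induces a subgraph of maximum degree at most 1. -/
theorem stmt_12 {V : Type*} [Fintype V] [LinearOrder V] (G : SimpleGraph V)
    (hG : G.IsPlanar)
    (L : V → Finset ℕ) (hL : ∀ v, (L v).card = 4) :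
    ∃ φ : V → ℕ, (∀ v, φ v ∈ L v) ∧
      ∀ v, {u | G.Adj v u ∧ φ u = φ v}.Subsingleton := by
  obtain ⟨M, P, m, h⟩ : Good G Finset.univ ∅ ∅ :=
    good_main G hG _ Finset.univ ∅ ∅ (Nat.lt_succ_self _) (by rintro ⟨z, hz⟩; exact hz.elim)
      (by simp) (by simp) (by simp) (by simp) (by simp)
  have hP : P ≠ 0 := by
    rintro rfl
    exact h.ne (by simp)
  obtain ⟨s, hs, hev⟩ := MvPolynomial.combinatorial_nullstellensatz_exists_eval_nonzero P m h.ne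
    (h.hom.totalDegree hP) (fun v => (L v).image (fun k : ℕ => (k : ℚ))) (by
      intro v
      rw [Finset.card_image_of_injective _ Nat.cast_injective, hL]
      exact Nat.lt_succ_of_le (h.m3 v (Finset.mem_univ v)))
  have hs' : ∀ v, ∃ k ∈ L v, (k : ℚ) = s v := fun v => by simpa using hs v
  choose φ hφ hφs using hs'
  refine ⟨φ, hφ, ?_⟩
  have hM : ∀ v u, G.Adj v u → φ u = φ v → M v u := by
    intro v u hvu huv
    by_contra hn
    exact h.ev s hev v (Finset.mem_univ v) u (Finset.mem_univ u) hvu hn (by simp)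
      (by rw [← hφs, ← hφs, huv])
  intro v u hu w hw
  exact h.uniq v u w (hM v u hu.1 hu.2) (hM v w hw.1 hw.2)
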